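/- arXiv:2511.23412 — 2 statements merged into one kernel-verified Lean document; each statement's English description precedes it below -/
import Mathlib

section
/- Let p be a natural number and let t₀ < t₁ < … < t_{2p+1} be a strictly increasing sequence of real numbers. For i = 0,…,p let N_i be the degree-p Cox–de Boor B-spline with local knot vector (t_i, t_{i+1}, …, t_{i+p+1}). Then for every real polynomial q in one variable of degree at most p there exist real coefficients c₀,…,c_p such that q(x) = ∑_{i=0}^{p} c_i N_i(x) for all x ∈ (t_p, t_{p+1}) (the p+1 B-splines covering a knot interval span the polynomials of degree at most p on that interval). -/
/-! The proof is Marsden's identity in homogeneous form. For knots `s` and `x` in the knot interval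
`[s (l + p), s (l + p + 1))`, the polynomial identity in an auxiliary variable `X`
`(1 + x X) ^ p = ∑_{i ≤ p} N_{l+i}(x) ∏_{1 ≤ j ≤ p} (1 + s_{l+i+j} X)`
holds (`marsden`). It is proved by induction on `p`: after applying the recursion, the two
splines of lower degree at the ends of the sum vanish at `x`, and the two terms involving a given
`N_a` of degree `p` combine because the affine function `u ↦ 1 + u X` is reproduced by linear
interpolation between `s_a` and `s_{a+p+1}`.

Comparing coefficients of `X ^ k` writes `binom(p, k) x ^ k`, for each `k ≤ p`, as a combination of
the B-splines with coefficients independent of `x` (elementary symmetric functions of the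
interior knots), and the monomials of degree at most `p` span the polynomials in question.
-/

/-- The Cox–de Boor B-spline of degree `p` with local knot vector `τ₀, …, τ_{p+1}`. -/
noncomputable def coxDeBoor : (p : ℕ) → (Fin (p + 2) → ℝ) → ℝ → ℝ
  | 0, τ, x => if τ 0 ≤ x ∧ x < τ 1 then 1 else 0
  | p + 1, τ, x =>
      (if τ ⟨p + 1, by omega⟩ - τ 0 = 0 then 0
        else (x - τ 0) / (τ ⟨p + 1, by omega⟩ - τ 0) *
          coxDeBoor p (fun i => τ i.castSucc) x) +
      (if τ ⟨p + 2, by omega⟩ - τ 1 = 0 then 0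
        else (τ ⟨p + 2, by omega⟩ - x) / (τ ⟨p + 2, by omega⟩ - τ 1) *
          coxDeBoor p (fun i => τ i.succ) x)

open Polynomial in
/-- The dual polynomial `∏_{1 ≤ j ≤ p} (1 + s_{i+j} X)` of the `i`-th B-spline of degree `p`. Its
coefficients are the elementary symmetric functions of the interior knots. -/
noncomputable def dualPoly (s : ℕ → ℝ) (p i : ℕ) : ℝ[X] :=
  ∏ j ∈ Finset.range p, (1 + C (s (i + 1 + j)) * X)

/-- The `i`-th B-spline of degree `p` for a knot sequence indexed by `ℕ`. -/
noncomputable def natSpline (s : ℕ → ℝ) (p i : ℕ) (x : ℝ) : ℝ :=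
  coxDeBoor p (fun j => s (i + j.val)) x

theorem natSpline_succ {s : ℕ → ℝ} (hs : StrictMono s) (p i : ℕ) (x : ℝ) :
    natSpline s (p + 1) i x =
      (x - s i) / (s (i + p + 1) - s i) * natSpline s p i x +
      (s (i + 1 + p + 1) - x) / (s (i + 1 + p + 1) - s (i + 1)) * natSpline s p (i + 1) x := by
  have h1 : s (i + p + 1) - s i ≠ 0 := (sub_pos.2 (hs (by omega))).ne'
  have h2 : s (i + 1 + p + 1) - s (i + 1) ≠ 0 := (sub_pos.2 (hs (by omega))).ne'
  have e : (fun j : Fin (p + 2) => s (i + (j.val + 1))) = fun j => s (i + 1 + j.val) :=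
    funext fun j => congrArg s (by omega)
  have e2 : i + 1 + p + 1 = i + (p + 2) := by omega
  rw [e2] at h2 ⊢
  rw [add_assoc] at h1 ⊢
  simp only [natSpline, coxDeBoor, Fin.val_zero, Fin.val_one, Fin.val_castSucc, Fin.val_succ,
    add_zero, if_neg h1, if_neg h2, e]

theorem natSpline_eq_zero {s : ℕ → ℝ} (hs : StrictMono s) (p i : ℕ) (x : ℝ)
    (hx : x < s i ∨ s (i + p + 1) ≤ x) : natSpline s p i x = 0 := by
  induction p generalizing i with
  | zero =>
    simp only [natSpline, coxDeBoor, Fin.val_zero, Fin.val_one, add_zero]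
    rw [if_neg]
    rintro ⟨h1, h2⟩
    rcases hx with hx | hx
    · exact absurd h1 (not_le.2 hx)
    · exact absurd h2 (not_lt.2 hx)
  | succ p ih =>
    rw [natSpline_succ hs, ih i, ih (i + 1)]
    · simp
    · rcases hx with hx | hx
      · exact Or.inl (hx.trans (hs (by omega)))
      · exact Or.inr ((hs.monotone (by omega)).trans hx)
    · rcases hx with hx | hx
      · exact Or.inl hx
      · exact Or.inr ((hs.monotone (by omega)).trans hx)

open Polynomial in
/-- Linear interpolation between the nodes `u` and `v` reproduces the affine function
`z ↦ 1 + z X`. -/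
theorem interp_affine {u v : ℝ} (huv : u < v) (x : ℝ) :
    C ((x - u) / (v - u)) * (1 + C v * X) + C ((v - x) / (v - u)) * (1 + C u * X)
      = (1 + C x * X : ℝ[X]) := by
  have h : v - u ≠ 0 := (sub_pos.2 huv).ne'
  have h1 : (x - u) / (v - u) + (v - x) / (v - u) = 1 := by field_simp; ring
  have h2 : (x - u) / (v - u) * v + (v - x) / (v - u) * u = x := by field_simp; ring
  have h1' := congrArg (C : ℝ → ℝ[X]) h1
  have h2' := congrArg (C : ℝ → ℝ[X]) h2
  simp only [C_add, C_mul, C_1] at h1' h2'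
  linear_combination h1' + X * h2'

open Polynomial in
/-- Marsden's identity, in homogeneous form. -/
theorem marsden {s : ℕ → ℝ} (hs : StrictMono s) (p l : ℕ) (x : ℝ)
    (h1 : s (l + p) ≤ x) (h2 : x < s (l + p + 1)) :
    (1 + C x * X : ℝ[X]) ^ p =
      ∑ i ∈ Finset.range (p + 1), C (natSpline s p (l + i) x) * dualPoly s p (l + i) := by
  induction p generalizing l with
  | zero =>
    have : natSpline s 0 l x = 1 := by
      simp only [natSpline, coxDeBoor, Fin.val_zero, Fin.val_one, add_zero]
      exact if_pos ⟨h1, h2⟩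
    simp [dualPoly, this]
  | succ p ih =>
    have e1 : l + 1 + p = l + (p + 1) := by omega
    have key := ih (l + 1) (by rwa [e1]) (by rwa [e1])
    have hleft : natSpline s p l x = 0 := natSpline_eq_zero hs p l x (Or.inr h1)
    have hright : natSpline s p (l + (p + 1) + 1) x = 0 :=
      natSpline_eq_zero hs p _ x (Or.inl h2)
    simp only [natSpline_succ hs, C_add, add_mul, Finset.sum_add_distrib]
    -- Shift the first sum by one, so that both sums run over the same splines of degree `p`.
    rw [Finset.sum_range_succ', Finset.sum_range_succ _ (p + 1), add_zero, hleft, hright]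
    simp only [mul_zero, C_0, zero_mul, add_zero]
    rw [pow_succ, key, Finset.sum_mul, ← Finset.sum_add_distrib]
    refine Finset.sum_congr rfl fun i _ => ?_
    have e2 : l + 1 + i = l + i + 1 := by omega
    have e3 : l + (i + 1) = l + i + 1 := by omega
    rw [e2, e3]
    have hR : dualPoly s (p + 1) (l + i + 1)
        = dualPoly s p (l + i + 1) * (1 + C (s (l + i + 1 + p + 1)) * X) := by
      rw [dualPoly, Finset.prod_range_succ, dualPoly]
      congr 4
      exact congrArg s (by omega)
    have hL : dualPoly s (p + 1) (l + i)
        = dualPoly s p (l + i + 1) * (1 + C (s (l + i + 1)) * X) := by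
      rw [dualPoly, Finset.prod_range_succ', dualPoly]
      congr 1
      refine Finset.prod_congr rfl fun j _ => ?_
      rw [show l + i + 1 + (j + 1) = l + i + 1 + 1 + j by omega]
    have hI := interp_affine (hs (show l + i + 1 < l + i + 1 + p + 1 by omega)) x
    rw [hR, hL, ← hI]
    simp only [C_mul]
    ring

open Polynomial in
theorem coeff_one_add_C_mul_X_pow (x : ℝ) (p k : ℕ) :
    ((1 + C x * X : ℝ[X]) ^ p).coeff k = p.choose k * x ^ k := by
  have : (1 + C x * X : ℝ[X]) ^ p = ((1 + X) ^ p : ℝ[X]).comp (C x * X) := by simp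
  rw [this, comp_C_mul_X_coeff, coeff_one_add_X_pow]

/-- The `p + 1` B-splines covering a knot interval span the polynomials of degree at
most `p` on that interval: given strictly increasing knots `t₀ < … < t_{2p+1}` and
the degree-`p` B-splines `N_i` with local knot vectors `(t_i, …, t_{i+p+1})`,
every polynomial of degree at most `p` is, on `(t_p, t_{p+1})`, a linear
combination of `N₀, …, N_p`. -/
theorem coxDeBoor_local_span_polynomials (p : ℕ) (t : Fin (2 * p + 2) → ℝ)
    (ht : StrictMono t)
    (N : Fin (p + 1) → ℝ → ℝ)
    (hN : ∀ i : Fin (p + 1), N i = coxDeBoor p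
      (fun j : Fin (p + 2) => t ⟨i.val + j.val, by have h1 := i.isLt; have h2 := j.isLt; omega⟩))
    (q : Polynomial ℝ) (hq : q.degree ≤ p) :
    ∃ c : Fin (p + 1) → ℝ,
      ∀ x ∈ Set.Ioo (t ⟨p, by omega⟩) (t ⟨p + 1, by omega⟩),
        q.eval x = ∑ i : Fin (p + 1), c i * N i x := by
  -- Extend the knots to a strictly increasing sequence on `ℕ`.
  obtain ⟨s, hs, hst⟩ : ∃ s : ℕ → ℝ, StrictMono s ∧
      ∀ n (h : n < 2 * p + 2), s n = t ⟨n, h⟩ := by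
    refine ⟨fun n => if h : n < 2 * p + 2 then t ⟨n, h⟩
      else t ⟨2 * p + 1, by omega⟩ + n, strictMono_nat_of_lt_succ fun n => ?_,
      fun n h => dif_pos h⟩
    by_cases h : n + 1 < 2 * p + 2
    · rw [dif_pos h, dif_pos (by omega : n < 2 * p + 2)]
      exact ht (Fin.mk_lt_mk.2 (Nat.lt_succ_self n))
    · rw [dif_neg h]
      by_cases h' : n < 2 * p + 2
      · rw [dif_pos h']
        have : t ⟨n, h'⟩ ≤ t ⟨2 * p + 1, by omega⟩ :=
          ht.monotone (Fin.mk_le_mk.2 (by omega))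
        push_cast
        have hn : (0 : ℝ) ≤ n := Nat.cast_nonneg n
        linarith
      · rw [dif_neg h']
        push_cast
        linarith
  have hNs : ∀ i : Fin (p + 1), ∀ x, N i x = natSpline s p i x := by
    intro i x
    rw [hN, natSpline]
    congr 1
    funext j
    exact (hst _ _).symm
  refine ⟨fun i => ∑ k ∈ Finset.range (p + 1),
    q.coeff k / p.choose k * (dualPoly s p i).coeff k, fun x hx => ?_⟩
  have hm := marsden hs p 0 x (by rw [zero_add, hst p (by omega)]; exact hx.1.le)
    (by rw [zero_add, hst (p + 1) (by omega)]; exact hx.2)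
  have hmono : ∀ k, (p.choose k : ℝ) * x ^ k
      = ∑ i : Fin (p + 1), natSpline s p i x * (dualPoly s p i).coeff k := by
    intro k
    rw [← coeff_one_add_C_mul_X_pow, hm, Polynomial.finsetSum_coeff, Finset.sum_range]
    simp only [zero_add, Polynomial.coeff_C_mul]
  have hdeg : q.natDegree < p + 1 :=
    Nat.lt_succ_of_le (Polynomial.natDegree_le_of_degree_le hq)
  rw [Polynomial.eval_eq_sum_range' hdeg]
  simp only [hNs, Finset.sum_mul]
  rw [Finset.sum_comm]
  refine Finset.sum_congr rfl fun k hk => ?_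
  have hc : (p.choose k : ℝ) ≠ 0 :=
    Nat.cast_ne_zero.2 (Nat.choose_pos (Nat.lt_succ_iff.1 (Finset.mem_range.1 hk))).ne'
  calc q.coeff k * x ^ k = q.coeff k / p.choose k * (p.choose k * x ^ k) := by field_simp
    _ = _ := by
      rw [hmono, Finset.mul_sum]
      exact Finset.sum_congr rfl fun i _ => by ring
end

section
/- Knot insertion for a single B-spline: let p be a natural number, let τ₀ ≤ τ₁ ≤ … ≤ τ_{p+1} be a nondecreasing sequence of real numbers with τ₀ < τ_{p+1}, and let z be a real number with τ₀ < z < τ_{p+1}. Let τ'₀ ≤ τ'₁ ≤ … ≤ τ'_{p+2} be the nondecreasing sequence of length p+3 obtained by inserting z into (τ₀,…,τ_{p+1}). Define α₁ = 1 if z ≥ τ_p and α₁ = (z − τ₀)/(τ_p − τ₀) otherwise, and define α₂ = 1 if z ≤ τ₁ and α₂ = (τ_{p+1} − z)/(τ_{p+1} − τ₁) otherwise. Then for every x ∈ ℝ, B[τ₀,…,τ_{p+1}](x) = α₁·B[τ'₀,…,τ'_{p+1}](x) + α₂·B[τ'₁,…,τ'_{p+2}](x); that is, the B-spline on the original local knot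 vector is the stated linear combination of the two B-splines whose local knot vectors are the first and the last p+2 consecutive knots of the refined knot vector. -/
/-- The B-spline divided by the length of its knot span. Division by zero makes it `0` when all
knots coincide, which is the convention of the Cox–de Boor recursion. -/
noncomputable def normBSpline (p : ℕ) (τ : Fin (p + 2) → ℝ) (x : ℝ) : ℝ :=
  coxDeBoor p τ x / (τ (Fin.last (p + 1)) - τ 0)

/-- If the end knots of a monotone knot vector coincide, every sub-vector has a degenerate span,
so the recursion holds as `0 = 0`. -/
lemma span_mul_normBSpline_succ (p : ℕ) (τ : Fin (p + 3) → ℝ) (hτ : Monotone τ) (x : ℝ) :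
    (τ (Fin.last (p + 2)) - τ 0) * normBSpline (p + 1) τ x =
      (x - τ 0) * normBSpline p (fun i => τ i.castSucc) x +
      (τ (Fin.last (p + 2)) - x) * normBSpline p (fun i => τ i.succ) x := by
  have e1 : (⟨p + 1, by omega⟩ : Fin (p + 3)) = (Fin.last (p + 1)).castSucc := rfl
  have e2 : (⟨p + 2, by omega⟩ : Fin (p + 3)) = Fin.last (p + 2) := rfl
  have h01 : τ 0 ≤ τ 1 := hτ (Fin.zero_le _)
  have h12 : τ 1 ≤ τ (Fin.last (p + 2)) := hτ (Fin.le_last _)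
  have h03 : τ 0 ≤ τ (Fin.last (p + 1)).castSucc := hτ (Fin.zero_le _)
  have h32 : τ (Fin.last (p + 1)).castSucc ≤ τ (Fin.last (p + 2)) := hτ (Fin.le_last _)
  simp only [normBSpline, Fin.castSucc_zero, Fin.succ_zero_eq_one, Fin.succ_last]
  by_cases h : τ (Fin.last (p + 2)) - τ 0 = 0
  · have h1 : τ (Fin.last (p + 1)).castSucc - τ 0 = 0 := by linarith
    have h2 : τ (Fin.last (p + 2)) - τ 1 = 0 := by linarith
    simp [h, h1, h2]
  · rw [mul_div_cancel₀ _ h, coxDeBoor, e1, e2]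
    congr 1
    · split_ifs with h1
      · simp [h1]
      · ring
    · split_ifs with h1
      · simp [h1]
      · ring

/-- The elimination behind the inductive step. Here `w` stands for `Q[L - d]`, and `q₁`, `q₂`, `q₃`
for `Q[L - d - c]`, `Q[L - a - d]`, `Q[L - d - z]`, where `c` is the last knot of `L - d`. -/
lemma insertion_left_step {a c x z w q₁ q₂ q₃ : ℝ} (hac : c - a ≠ 0)
    (hrec : (c - a) * w = (x - a) * q₁ + (c - x) * q₂)
    (hins : (c - a) * q₃ = (z - a) * q₁ + (c - z) * q₂) :
    (z - a) * w = (x - a) * q₃ + (z - x) * q₂ := by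
  apply mul_left_cancel₀ hac
  linear_combination (z - a) * hrec - (x - a) * hins

/-- The mirror image of `insertion_left_step`, with `b` the first knot of `L - a`. -/
lemma insertion_right_step {b d x z w q₁ q₂ q₃ : ℝ} (hbd : d - b ≠ 0)
    (hrec : (d - b) * w = (x - b) * q₂ + (d - x) * q₁)
    (hins : (d - b) * q₃ = (z - b) * q₂ + (d - z) * q₁) :
    (d - z) * w = (d - x) * q₃ + (x - z) * q₂ := by
  apply mul_left_cancel₀ hbd
  linear_combination (d - z) * hrec - (d - x) * hins

lemma normBSpline_eq_zero (p : ℕ) (τ : Fin (p + 2) → ℝ) (x : ℝ)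
    (h : τ (Fin.last (p + 1)) = τ 0) : normBSpline p τ x = 0 := by
  simp [normBSpline, h]

/-- A monotone family whose end values agree is constant, so any knots taken from it give `0`. -/
lemma normBSpline_comp_eq_zero {m p : ℕ} (s : Fin (m + 1) → ℝ) (hs : Monotone s)
    (h : s (Fin.last m) = s 0) (f : Fin (p + 2) → Fin (m + 1)) (x : ℝ) :
    normBSpline p (fun i => s (f i)) x = 0 := by
  have hc : ∀ i, s i = s 0 := fun i =>
    le_antisymm (h ▸ hs (Fin.le_last i)) (hs (Fin.zero_le i))
  apply normBSpline_eq_zero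
  simp only [hc]

/-- Knot insertion in symmetric form: `s` is the refined knot vector, and the knot `s k` is the
inserted one. -/
lemma normBSpline_insertion (p : ℕ) : ∀ (s : Fin (p + 3) → ℝ), Monotone s →
    ∀ (k : Fin (p + 3)) (x : ℝ),
    (s (Fin.last (p + 2)) - s 0) * normBSpline p (fun i => s (k.succAbove i)) x =
      (s k - s 0) * normBSpline p (fun i => s i.castSucc) x +
      (s (Fin.last (p + 2)) - s k) * normBSpline p (fun i => s i.succ) x := by
  induction p with
  | zero =>
    intro s hs k x
    have h01 : s 0 ≤ s 1 := hs (by decide)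
    have h12 : s 1 ≤ s 2 := hs (by decide)
    -- In degree `0`, span times `Q` is the indicator function of the half-open span.
    have hQ : ∀ t : Fin 2 → ℝ,
        (t 1 - t 0) * normBSpline 0 t x = if t 0 ≤ x ∧ x < t 1 then 1 else 0 := by
      intro t
      by_cases h : t 1 - t 0 = 0
      · have : ¬ (t 0 ≤ x ∧ x < t 1) := by rintro ⟨h1, h2⟩; linarith
        simp [h, this]
      · have e : Fin.last (0 + 1) = (1 : Fin 2) := rfl
        rw [normBSpline, e, mul_div_cancel₀ _ h, coxDeBoor]
    fin_cases k
    · simp [Fin.last]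
    · have hA := hQ (fun i => s ((1 : Fin 3).succAbove i))
      have hB := hQ (fun i => s i.castSucc)
      have hC := hQ (fun i => s i.succ)
      have f0 : (1 : Fin 3).succAbove 0 = 0 := by decide
      have f1 : (1 : Fin 3).succAbove 1 = 2 := by decide
      have f2 : (0 : Fin 2).castSucc = 0 := rfl
      have f3 : (1 : Fin 2).castSucc = 1 := rfl
      have f4 : (0 : Fin 2).succ = 1 := rfl
      have f5 : (1 : Fin 2).succ = 2 := rfl
      simp only [f0, f1, f2, f3, f4, f5] at hA hB hC
      change (s 2 - s 0) * normBSpline 0 (fun i => s ((1 : Fin 3).succAbove i)) x =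
        (s 1 - s 0) * normBSpline 0 (fun i => s i.castSucc) x +
        (s 2 - s 1) * normBSpline 0 (fun i => s i.succ) x
      rw [hA, hB, hC]
      split_ifs <;> first | (norm_num; done) | (exfalso; grind)
    · change (s (Fin.last 2) - s 0) * normBSpline 0 (fun i => s ((Fin.last 2).succAbove i)) x =
        (s (Fin.last 2) - s 0) * normBSpline 0 (fun i => s i.castSucc) x +
        (s (Fin.last 2) - s (Fin.last 2)) * normBSpline 0 (fun i => s i.succ) x
      simp only [Fin.succAbove_last]
      ring
  | succ p ih =>
    intro s hs k x
    rcases Fin.eq_castSucc_or_eq_last k with ⟨k₁, rfl⟩ | rfl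
    swap
    · simp
    by_cases hk0 : k₁ = 0
    · subst hk0; simp
    obtain ⟨j, rfl⟩ := Fin.exists_succ_eq.mpr hk0
    have hsl : Monotone (fun i : Fin (p + 3) => s i.castSucc) :=
      hs.comp (Fin.strictMono_castSucc).monotone
    have hsr : Monotone (fun i : Fin (p + 3) => s i.succ) :=
      hs.comp (Fin.strictMono_succ).monotone
    have hz : j.succ.castSucc = j.castSucc.succ := rfl
    have hrec := span_mul_normBSpline_succ p
      (fun i => s (j.succ.castSucc.succAbove i)) (hs.comp (Fin.strictMono_succAbove _).monotone) x
    have hl : (z : ℝ) → z = s j.succ.castSucc →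
        (z - s 0) * normBSpline (p + 1) (fun i => s i.castSucc) x =
        (x - s 0) * normBSpline p (fun i => s (j.succ.succAbove i).castSucc) x +
        (z - x) * normBSpline p (fun i => s i.succ.castSucc) x := by
      rintro z rfl
      by_cases h : s (Fin.last (p + 2)).castSucc - s 0 = 0
      · have h' : s (Fin.last (p + 2)).castSucc = s (0 : Fin (p + 3)).castSucc := by
          simpa [sub_eq_zero] using h
        rw [normBSpline_comp_eq_zero _ hsl h' (fun i => i) x,
          normBSpline_comp_eq_zero _ hsl h' (fun i => j.succ.succAbove i) x,
          normBSpline_comp_eq_zero _ hsl h' (fun i => i.succ) x]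
        ring
      · exact insertion_left_step h (span_mul_normBSpline_succ p _ hsl x) (ih _ hsl j.succ x)
    have hr : (z : ℝ) → z = s j.succ.castSucc →
        (s (Fin.last (p + 3)) - z) * normBSpline (p + 1) (fun i => s i.succ) x =
        (s (Fin.last (p + 3)) - x) * normBSpline p (fun i => s (j.castSucc.succAbove i).succ) x +
        (x - z) * normBSpline p (fun i => s i.succ.castSucc) x := by
      rintro z rfl
      by_cases h : s (Fin.last (p + 3)) - s (0 : Fin (p + 3)).succ = 0
      · have h' : s (Fin.last (p + 2)).succ = s (0 : Fin (p + 3)).succ := by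
          simpa [sub_eq_zero] using h
        rw [normBSpline_comp_eq_zero _ hsr h' (fun i => i) x,
          normBSpline_comp_eq_zero _ hsr h' (fun i => j.castSucc.succAbove i) x]
        have := normBSpline_comp_eq_zero _ hsr h' (fun i : Fin (p + 2) => i.castSucc) x
        simp only [Fin.succ_castSucc] at this ⊢
        rw [this]
        ring
      · exact insertion_right_step h (span_mul_normBSpline_succ p _ hsr x)
          (ih _ hsr j.castSucc x)
    have hl := hl _ rfl
    have hr := hr _ rfl
    have g1 : j.succ.castSucc.succAbove 0 = 0 := by
      rw [hz]; exact Fin.succ_succAbove_zero _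
    have g2 : j.succ.castSucc.succAbove (Fin.last (p + 2)) = Fin.last (p + 3) := by
      rw [Fin.succAbove_of_le_castSucc _ _ (Fin.castSucc_le_castSucc_iff.mpr (Fin.le_last _)),
        Fin.succ_last]
    have g3 : ∀ i : Fin (p + 2), j.succ.castSucc.succAbove i.castSucc =
        (j.succ.succAbove i).castSucc := fun i => Fin.castSucc_succAbove_castSucc
    have g4 : ∀ i : Fin (p + 2), j.succ.castSucc.succAbove i.succ =
        (j.castSucc.succAbove i).succ := fun i => by
      rw [hz]; exact Fin.succ_succAbove_succ _ _
    simp only [g1, g2, g3, g4] at hrec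
    linear_combination hrec - hl - hr

/-- Two monotone families with the same multiset of values are equal: both list it in sorted
order. -/
lemma monotone_eq_of_map_eq {n : ℕ} {f g : Fin n → ℝ} (hf : Monotone f) (hg : Monotone g)
    (h : Multiset.map f Finset.univ.val = Multiset.map g Finset.univ.val) : f = g := by
  have hp : (List.ofFn f).Perm (List.ofFn g) := by
    rw [← Multiset.coe_eq_coe]
    simpa [Fin.univ_def, List.ofFn_eq_map] using h
  exact List.ofFn_injective (hp.eq_of_sortedLE hf.sortedLE_ofFn hg.sortedLE_ofFn)

/-- Inserting `z` into `τ` means that `τ` is `τ'` with an entry equal to `z` deleted. -/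
lemma exists_succAbove_of_map_eq_cons {n : ℕ} {τ : Fin n → ℝ} {τ' : Fin (n + 1) → ℝ} {z : ℝ}
    (hτ : Monotone τ) (hτ' : Monotone τ')
    (hins : Multiset.map τ' Finset.univ.val = z ::ₘ Multiset.map τ Finset.univ.val) :
    ∃ k, τ' k = z ∧ τ = fun i => τ' (k.succAbove i) := by
  have hz : z ∈ Multiset.map τ' Finset.univ.val := by rw [hins]; exact Multiset.mem_cons_self _ _
  obtain ⟨k, -, hk⟩ := Multiset.mem_map.mp hz
  refine ⟨k, hk, monotone_eq_of_map_eq hτ (hτ'.comp (Fin.strictMono_succAbove k).monotone) ?_⟩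
  rw [Fin.univ_succAbove n k, Finset.cons_val, Multiset.map_cons, hk, Multiset.cons_inj_right]
    at hins
  rw [← hins]
  simp [Function.comp_def]

/-- Knot insertion for a single B-spline: inserting a knot `z` with
`τ₀ < z < τ_{p+1}` into the local knot vector `τ₀ ≤ … ≤ τ_{p+1}` yields a refined
nondecreasing knot vector `τ'₀ ≤ … ≤ τ'_{p+2}`, and the original B-spline is the
stated linear combination of the two B-splines on the first and last `p + 2`
consecutive knots of the refined knot vector. -/
theorem coxDeBoor_knot_insertion (p : ℕ) (τ : Fin (p + 2) → ℝ) (hτ : Monotone τ)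
    (hne : τ 0 < τ ⟨p + 1, by omega⟩)
    (z : ℝ) (hz₀ : τ 0 < z) (hz₁ : z < τ ⟨p + 1, by omega⟩)
    (τ' : Fin (p + 3) → ℝ) (hτ' : Monotone τ')
    (hins : Multiset.map τ' Finset.univ.val = z ::ₘ Multiset.map τ Finset.univ.val)
    (α₁ α₂ : ℝ)
    (hα₁ : α₁ = if τ ⟨p, by omega⟩ ≤ z then 1 else (z - τ 0) / (τ ⟨p, by omega⟩ - τ 0))
    (hα₂ : α₂ = if z ≤ τ 1 then 1
      else (τ ⟨p + 1, by omega⟩ - z) / (τ ⟨p + 1, by omega⟩ - τ 1)) :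
    ∀ x : ℝ, coxDeBoor p τ x =
      α₁ * coxDeBoor p (fun i => τ' i.castSucc) x +
      α₂ * coxDeBoor p (fun i => τ' i.succ) x := by
  obtain ⟨k, rfl, rfl⟩ := exists_succAbove_of_map_eq_cons hτ hτ' hins
  intro x
  have el : (⟨p + 1, by omega⟩ : Fin (p + 2)) = Fin.last (p + 1) := rfl
  simp only [el] at hne hz₁ hα₁ hα₂
  -- The strict inequalities on `z` force its index `k` to be interior.
  rcases Fin.eq_castSucc_or_eq_last k with ⟨k₁, rfl⟩ | rfl
  swap
  · exact absurd (hτ' (Fin.le_last _)) (not_le.mpr hz₁)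
  have hk0 : k₁ ≠ 0 := by
    rintro rfl
    exact absurd (hτ' (Fin.zero_le _)) (not_le.mpr hz₀)
  obtain ⟨j, rfl⟩ := Fin.exists_succ_eq.mpr hk0
  have hz : j.succ.castSucc = j.castSucc.succ := rfl
  have g1 : j.succ.castSucc.succAbove 0 = 0 := by
    rw [hz]; exact Fin.succ_succAbove_zero _
  have g2 : j.succ.castSucc.succAbove (Fin.last (p + 1)) = Fin.last (p + 2) := by
    rw [Fin.succAbove_of_le_castSucc _ _ (Fin.castSucc_le_castSucc_iff.mpr (Fin.le_last _)),
      Fin.succ_last]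
  simp only [g1, g2] at hne hz₀ hz₁ hα₁ hα₂
  have key := normBSpline_insertion p τ' hτ' j.succ.castSucc x
  -- `τ'_{p+1}` is the larger of `z` and `τ_p`.
  have hα₁' : α₁ = (τ' j.succ.castSucc - τ' 0) / (τ' (Fin.last (p + 1)).castSucc - τ' 0) := by
    have hle : τ' j.succ.castSucc ≤ τ' (Fin.last (p + 1)).castSucc :=
      hτ' (Fin.castSucc_le_castSucc_iff.mpr (Fin.le_last _))
    by_cases hj : j = Fin.last p
    · subst hj
      have h1 : τ' ((Fin.last p).succ.castSucc.succAbove ⟨p, by omega⟩) ≤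
          τ' (Fin.last p).succ.castSucc := by
        apply hτ'
        simp only [Fin.le_def, Fin.succAbove]
        split_ifs <;> simp
      rw [if_pos h1] at hα₁
      rw [hα₁, Fin.succ_last, div_self]
      rw [Fin.succ_last] at hz₀
      linarith
    · have hjp : (j : ℕ) < p := by
        have := Fin.val_lt_last hj
        simpa using this
      have g : j.succ.castSucc.succAbove ⟨p, by omega⟩ = (Fin.last (p + 1)).castSucc := by
        rw [Fin.succAbove_of_le_castSucc _ _ (by simp [Fin.le_def]; omega)]
        rfl
      rw [g] at hα₁
      rw [hα₁]
      split_ifs with h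
      · have : τ' (Fin.last (p + 1)).castSucc = τ' j.succ.castSucc := le_antisymm h hle
        rw [this, div_self]
        linarith
      · rfl
  -- `τ'₁` is the smaller of `z` and `τ₁`.
  have hα₂' : α₂ = (τ' (Fin.last (p + 2)) - τ' j.succ.castSucc) /
      (τ' (Fin.last (p + 2)) - τ' 1) := by
    have hle : τ' 1 ≤ τ' j.succ.castSucc := by
      apply hτ'
      simp [Fin.le_def]
    by_cases hj : (j : ℕ) = 0
    · have g : j.succ.castSucc = 1 := by ext; simp [hj]
      rw [g] at hα₂ hz₁
      have h1 : τ' 1 ≤ τ' ((1 : Fin (p + 3)).succAbove 1) := by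
        apply hτ'
        have e : (1 : Fin (p + 3)) = (1 : Fin (p + 2)).castSucc := rfl
        conv_rhs => rw [e, Fin.succAbove_castSucc_self]
        exact (Fin.castSucc_lt_succ (i := (1 : Fin (p + 2)))).le
      rw [if_pos h1] at hα₂
      rw [hα₂, g, div_self]
      linarith
    · have g : j.succ.castSucc.succAbove 1 = 1 := by
        rw [Fin.succAbove_of_castSucc_lt _ _ (by
          change 1 % (p + 2) < (j : ℕ) + 1
          rw [Nat.mod_eq_of_lt (by omega)]
          omega)]
        rfl
      rw [g] at hα₂
      rw [hα₂]
      split_ifs with h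
      · have : τ' 1 = τ' j.succ.castSucc := le_antisymm hle h
        rw [this, div_self]
        linarith
      · rfl
  simp only [normBSpline, g1, g2, Fin.castSucc_zero, Fin.succ_zero_eq_one, Fin.succ_last] at key
  rw [mul_div_cancel₀ _ (sub_ne_zero.mpr hne.ne')] at key
  rw [key, hα₁', hα₂']
  ring
end
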